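/- Let S be a semigroup with a finite choice of generators X via π : X⁺ → S. Let S¹ = WithOne S be the monoid obtained by adjoining an identity element 1, let Y = X ∪ {e} where e is a new symbol, and let ρ : Y⁺ → S¹ be the (surjective) semigroup homomorphism sending each x ∈ X to x̄ ∈ S ⊆ S¹ and e to 1. Then γ^{S¹,Y} ≥ γ^{S,X} + 1. In particular, if S has maximal global cogrowth with respect to X then S¹ has maximal global cogrowth with respect to Y. -/

import Mathlib

/-!
Inserting `m` copies of the new letter `e` (here `none`) into the concatenation `uv` of a pair
`(u, v)` with `π u = π v` and `|u| + |v| = k`, and cutting the result just after the last letter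
of `u`, gives a pair for `S¹`. The original pair and the inserted positions can be recovered, so
`γ_ρ(m + k) ≥ (m + k choose k) γ_π(k)` (`choose_mul_gammaFn_le`).

This passes to the rates through generating functions. Let `r > γ_ρ` and `x = 1 / r < 1`. Then
`C = ∑ₙ γ_ρ(n) xⁿ` is finite, and for every `k`
`γ_π(k) xᵏ / (1 - x)ᵏ⁺¹ = ∑ₘ (m + k choose k) γ_π(k) xᵐ⁺ᵏ ≤ C`.
Hence `γ_π(k) ≤ C (1 - x) (r - 1)ᵏ`, so the rate of `π` is at most `r - 1`. As `r` was arbitrary,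
`γ_π + 1 ≤ γ_ρ` (`gammaRate_add_one_le`). Maximality is preserved because a rate never exceeds
the number of generators: `γ(n) ≤ n |X|ⁿ` (`gammaFn_le`).
-/

open Filter

/-- The global cogrowth function. -/
noncomputable def gammaFn {X : Type} {S : Type*} [Mul S]
    (π : FreeSemigroup X →ₙ* S) (n : ℕ) : ℕ :=
  Nat.card {p : FreeSemigroup X × FreeSemigroup X //
    p.1.length + p.2.length = n ∧ π p.1 = π p.2}

/-- The global cogrowth rate. -/
noncomputable def gammaRate {X : Type} {S : Type*} [Mul S]
    (π : FreeSemigroup X →ₙ* S) : ℝ :=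
  Filter.atTop.limsup (fun n : ℕ => (gammaFn π n : ℝ) ^ (1 / (n : ℝ)))

/-! ### Words and evaluation -/

/-- The nonempty word `w`, as a list of letters. -/
def wordList {α : Type} (w : FreeSemigroup α) : List α := w.head :: w.tail

lemma wordList_injective {α : Type} : Function.Injective (wordList (α := α)) := by
  rintro ⟨a, s⟩ ⟨b, t⟩ h
  simpa [wordList] using h

lemma wordList_length {α : Type} (w : FreeSemigroup α) : (wordList w).length = w.length := rfl

lemma exists_wordList {α : Type} {l : List α} (h : l ≠ []) : ∃ w, wordList w = l := by
  cases l with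
  | nil => exact absurd rfl h
  | cons a t => exact ⟨⟨a, t⟩, rfl⟩

lemma wordList_mul {α : Type} (u v : FreeSemigroup α) :
    wordList (u * v) = wordList u ++ wordList v := rfl

lemma map_eq_prod {α : Type} {M : Type*} [Monoid M] (f : FreeSemigroup α →ₙ* M)
    (w : FreeSemigroup α) :
    f w = ((wordList w).map fun a => f (FreeSemigroup.of a)).prod := by
  induction w using FreeSemigroup.recOnMul with
  | ih1 a => simp [wordList, FreeSemigroup.of]
  | ih2 a w h1 h2 => rw [map_mul, wordList_mul, List.map_append, List.prod_append, ← h1, ← h2]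

lemma prod_reduceOption {X : Type} {M : Type*} [Monoid M] (g : Option X → M) (hg : g none = 1)
    (l : List (Option X)) :
    (l.map g).prod = (l.reduceOption.map fun x => g (some x)).prod := by
  induction l with
  | nil => rfl
  | cons a l ih => cases a <;> simp [hg, ih]

/-- Erasing the letter `none`, which represents `1`, turns evaluation in `S¹` into
evaluation in `S`. -/
lemma rho_eq {X : Type} {S : Type*} [Semigroup S]
    (π : FreeSemigroup X →ₙ* S)
    (ρ : FreeSemigroup (Option X) →ₙ* WithOne S)
    (hρX : ∀ x : X, ρ (FreeSemigroup.of (some x)) = (π (FreeSemigroup.of x) : WithOne S))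
    (hρe : ρ (FreeSemigroup.of (none : Option X)) = 1)
    (w : FreeSemigroup (Option X)) (u : FreeSemigroup X)
    (h : (wordList w).reduceOption = wordList u) : ρ w = (π u : WithOne S) := by
  rw [map_eq_prod ρ w, prod_reduceOption _ hρe, h]
  have := map_eq_prod ((WithOne.coeMulHom (α := S)).comp π) u
  simp only [hρX]
  exact this.symm

/-! ### Finiteness and the exponential upper bound -/

/-- The pairs counted by `gammaFn π n`. -/
abbrev CoPair {X : Type} {S : Type*} [Mul S] (π : FreeSemigroup X →ₙ* S) (n : ℕ) :=
  {p : FreeSemigroup X × FreeSemigroup X // p.1.length + p.2.length = n ∧ π p.1 = π p.2}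

/-- A pair is recorded by the length of its first word and the concatenation of its two words. -/
def coPairCode {X : Type} {S : Type*} [Mul S] (π : FreeSemigroup X →ₙ* S) (n : ℕ)
    (p : CoPair π n) : Fin n × List.Vector X n :=
  (⟨p.1.1.length, by
      have h := p.2.1
      have : 0 < p.1.2.length := Nat.succ_pos _
      omega⟩,
    ⟨wordList p.1.1 ++ wordList p.1.2, by
      rw [List.length_append, wordList_length, wordList_length, p.2.1]⟩)

lemma coPairCode_injective {X : Type} {S : Type*} [Mul S] (π : FreeSemigroup X →ₙ* S) (n : ℕ) :
    Function.Injective (coPairCode π n) := by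
  rintro ⟨⟨u, v⟩, h⟩ ⟨⟨u', v'⟩, h'⟩ e
  have e1 : u.length = u'.length := congrArg (fun z => (z.1 : ℕ)) e
  have e2 : wordList u ++ wordList v = wordList u' ++ wordList v' :=
    congrArg (fun z => z.2.1) e
  obtain ⟨a, b⟩ := List.append_inj e2 e1
  have := wordList_injective a
  have := wordList_injective b
  subst_vars
  rfl

instance coPair_finite {X : Type} {S : Type*} [Mul S] [Fintype X] (π : FreeSemigroup X →ₙ* S)
    (n : ℕ) : Finite (CoPair π n) :=
  Finite.of_injective _ (coPairCode_injective π n)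

lemma gammaFn_le {X : Type} {S : Type*} [Mul S] [Fintype X] (π : FreeSemigroup X →ₙ* S)
    (n : ℕ) : gammaFn π n ≤ n * Fintype.card X ^ n := by
  have h := Nat.card_le_card_of_injective _ (coPairCode_injective π n)
  rw [Nat.card_prod, Nat.card_fin, Nat.card_eq_fintype_card (α := List.Vector X n),
    card_vector] at h
  exact h

/-! ### Inserting copies of the new letter -/

open Classical in
/-- The words obtained from `w` by inserting `m` copies of the letter `none`. -/
noncomputable def padded {X : Type} : List X → ℕ → Finset (List (Option X))
  | [], 0 => {[]}
  | [], m + 1 => (padded [] m).image (none :: ·)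
  | x :: w, 0 => (padded w 0).image (some x :: ·)
  | x :: w, m + 1 => (padded w (m + 1)).image (some x :: ·) ∪ (padded (x :: w) m).image (none :: ·)

lemma mem_padded {X : Type} (w : List X) (m : ℕ) (l : List (Option X)) (h : l ∈ padded w m) :
    l.length = m + w.length ∧ l.reduceOption = w := by
  classical
  fun_induction padded w m generalizing l with
  | case1 => simp at h; simp [h]
  | case2 m ih =>
    simp only [Finset.mem_image] at h
    obtain ⟨l, hl, rfl⟩ := h
    have := ih l hl
    simp_all
  | case3 x w ih =>
    simp only [Finset.mem_image] at h
    obtain ⟨l, hl, rfl⟩ := h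
    have := ih l hl
    simp_all
  | case4 x w m ih1 ih2 =>
    simp only [Finset.mem_image, Finset.mem_union] at h
    rcases h with ⟨l, hl, rfl⟩ | ⟨l, hl, rfl⟩
    · have := ih1 l hl
      simp_all
      omega
    · have := ih2 l hl
      simp_all
      omega

lemma card_padded {X : Type} (w : List X) (m : ℕ) :
    (padded w m).card = (m + w.length).choose w.length := by
  classical
  have inj : ∀ a : Option X, Function.Injective (fun l : List (Option X) => a :: l) :=
    fun a => List.cons_injective
  fun_induction padded w m with
  | case1 => simp
  | case2 m ih => rw [Finset.card_image_of_injective _ (inj _), ih]; simp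
  | case3 x w ih => rw [Finset.card_image_of_injective _ (inj _), ih]; simp
  | case4 x w m ih1 ih2 =>
    rw [Finset.card_union_of_disjoint, Finset.card_image_of_injective _ (inj _),
      Finset.card_image_of_injective _ (inj _), ih1, ih2]
    · simp only [List.length_cons]
      rw [show m + 1 + (w.length + 1) = (m + w.length + 1) + 1 by ring, Nat.choose_succ_succ,
        show m + 1 + w.length = m + w.length + 1 by ring,
        show m + (w.length + 1) = m + w.length + 1 by ring]
    · rw [Finset.disjoint_left]
      simp only [Finset.mem_image]
      rintro _ ⟨l, -, rfl⟩ ⟨l', -, h⟩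
      simp at h

/-- A padded word splits just after its `j`-th letter different from `none`. -/
lemma exists_split {X : Type} (l : List (Option X)) (j : ℕ) :
    ∃ a b, a ++ b = l ∧ a.reduceOption = l.reduceOption.take j ∧
      b.reduceOption = l.reduceOption.drop j := by
  induction l generalizing j with
  | nil => exact ⟨[], [], by simp⟩
  | cons c l ih =>
    cases j with
    | zero => exact ⟨[], c :: l, by simp⟩
    | succ j =>
      cases c with
      | none =>
        obtain ⟨a, b, h, h1, h2⟩ := ih (j + 1)
        exact ⟨none :: a, b, by simp [h, h1, h2]⟩
      | some x =>
        obtain ⟨a, b, h, h1, h2⟩ := ih j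
        exact ⟨some x :: a, b, by simp [h, h1, h2]⟩

/-- Inserting `m` copies of the new letter into the concatenation of a pair of total length `k`,
in every possible way, gives distinct pairs for `S¹`. -/
lemma choose_mul_gammaFn_le {X : Type} {S : Type*} [Semigroup S] [Fintype X]
    (π : FreeSemigroup X →ₙ* S)
    (ρ : FreeSemigroup (Option X) →ₙ* WithOne S)
    (hρX : ∀ x : X, ρ (FreeSemigroup.of (some x)) = (π (FreeSemigroup.of x) : WithOne S))
    (hρe : ρ (FreeSemigroup.of (none : Option X)) = 1) (m k : ℕ) :
    (m + k).choose k * gammaFn π k ≤ gammaFn ρ (m + k) := by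
  have key : ∀ z : (Σ p : CoPair π k, padded (wordList p.1.1 ++ wordList p.1.2) m),
      ∃ q : CoPair ρ (m + k), wordList q.1.1 ++ wordList q.1.2 = z.2.1 ∧
        (wordList q.1.1).reduceOption = wordList z.1.1.1 ∧
        (wordList q.1.2).reduceOption = wordList z.1.1.2 := by
    rintro ⟨⟨⟨u, v⟩, hl, he⟩, ⟨l, hm⟩⟩
    obtain ⟨h1, h2⟩ := mem_padded _ _ _ hm
    obtain ⟨a, b, hab, ha, hb⟩ := exists_split l (wordList u).length
    rw [h2] at ha hb
    simp only [List.take_left, List.drop_left] at ha hb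
    have ha0 : a ≠ [] := by rintro rfl; simp [wordList] at ha
    have hb0 : b ≠ [] := by rintro rfl; simp [wordList] at hb
    obtain ⟨a, rfl⟩ := exists_wordList ha0
    obtain ⟨b, rfl⟩ := exists_wordList hb0
    refine ⟨⟨(a, b), ?_, ?_⟩, hab, ha, hb⟩
    · have := congrArg List.length hab
      simp only [List.length_append, wordList_length] at this h1 hl ⊢
      omega
    · have he' : π u = π v := he
      change ρ a = ρ b
      rw [rho_eq π ρ hρX hρe a u ha, rho_eq π ρ hρX hρe b v hb, he']
  choose F hF using key
  have hinj : Function.Injective F := by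
    rintro ⟨⟨⟨u, v⟩, h⟩, ⟨l, hl⟩⟩ ⟨⟨⟨u', v'⟩, h'⟩, ⟨l', hl'⟩⟩ e
    have A := hF ⟨⟨⟨u, v⟩, h⟩, ⟨l, hl⟩⟩
    have B := hF ⟨⟨⟨u', v'⟩, h'⟩, ⟨l', hl'⟩⟩
    rw [e] at A
    have e1 : u = u' := wordList_injective (A.2.1.symm.trans B.2.1)
    have e2 : v = v' := wordList_injective (A.2.2.symm.trans B.2.2)
    have e3 : l = l' := A.1.symm.trans B.1
    subst e1 e2 e3
    rfl
  have hc := Nat.card_le_card_of_injective F hinj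
  have := Fintype.ofFinite (CoPair π k)
  rw [Nat.card_sigma] at hc
  have hterm : ∀ p : CoPair π k,
      Nat.card (padded (wordList p.1.1 ++ wordList p.1.2) m) = (m + k).choose k := by
    intro p
    rw [Nat.card_eq_fintype_card, Fintype.card_coe, card_padded, List.length_append,
      wordList_length, wordList_length, p.2.1]
  simp only [hterm, Finset.sum_const, Finset.card_univ, smul_eq_mul] at hc
  rw [← Nat.card_eq_fintype_card, mul_comm] at hc
  exact hc

/-! ### Growth rates -/

lemma tendsto_root_bound {C r : ℝ} (hC : 0 < C) (hr : 0 ≤ r) :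
    Tendsto (fun n : ℕ => (C * n * r ^ n) ^ (1 / (n : ℝ))) atTop (nhds r) := by
  have h0 : Tendsto (fun n : ℕ => 1 / (n : ℝ)) atTop (nhds 0) :=
    tendsto_one_div_atTop_nhds_zero_nat
  have h1 : Tendsto (fun n : ℕ => C ^ (1 / (n : ℝ))) atTop (nhds 1) := by
    simpa [Function.comp_def] using (Real.continuousAt_const_rpow hC.ne').tendsto.comp h0
  have h2 : Tendsto (fun n : ℕ => (n : ℝ) ^ (1 / (n : ℝ))) atTop (nhds 1) :=
    tendsto_rpow_div.comp tendsto_natCast_atTop_atTop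
  have h3 := (h1.mul h2).mul_const r
  rw [one_mul, one_mul] at h3
  refine h3.congr' ?_
  filter_upwards [eventually_ge_atTop 1] with n hn
  rw [Real.mul_rpow (by positivity) (by positivity), Real.mul_rpow (by positivity) (by positivity),
    one_div, Real.pow_rpow_inv_natCast hr (by omega)]

lemma root_eventually_le {f : ℕ → ℕ} {C r : ℝ}
    (h : ∀ n ≥ 1, (f n : ℝ) ≤ C * n * r ^ n) :
    ∀ᶠ n : ℕ in atTop, (f n : ℝ) ^ (1 / (n : ℝ)) ≤ (C * n * r ^ n) ^ (1 / (n : ℝ)) := by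
  filter_upwards [eventually_ge_atTop 1] with n hn
  exact Real.rpow_le_rpow (by positivity) (h n hn) (by positivity)

lemma root_isBounded {f : ℕ → ℕ} {C r : ℝ} (hC : 0 < C) (hr : 0 ≤ r)
    (h : ∀ n ≥ 1, (f n : ℝ) ≤ C * n * r ^ n) :
    IsBoundedUnder (· ≤ ·) atTop (fun n : ℕ => (f n : ℝ) ^ (1 / (n : ℝ))) :=
  (tendsto_root_bound hC hr).isBoundedUnder_le.mono_le (root_eventually_le h)

lemma limsup_root_le {f : ℕ → ℕ} {C r : ℝ} (hC : 0 < C) (hr : 0 ≤ r)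
    (h : ∀ n ≥ 1, (f n : ℝ) ≤ C * n * r ^ n) :
    atTop.limsup (fun n : ℕ => (f n : ℝ) ^ (1 / (n : ℝ))) ≤ r := by
  rw [← (tendsto_root_bound hC hr).limsup_eq]
  refine limsup_le_limsup (root_eventually_le h) ?_ (tendsto_root_bound hC hr).isBoundedUnder_le
  exact isCoboundedUnder_le_of_le atTop (x := 0) fun n => by positivity

lemma gammaFn_le_real {X : Type} {S : Type*} [Mul S] [Fintype X] (π : FreeSemigroup X →ₙ* S)
    (n : ℕ) : (gammaFn π n : ℝ) ≤ 1 * n * (Fintype.card X : ℝ) ^ n := by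
  rw [one_mul]
  exact_mod_cast gammaFn_le π n

lemma gammaRate_le_card {X : Type} {S : Type*} [Mul S] [Fintype X] (π : FreeSemigroup X →ₙ* S) :
    gammaRate π ≤ Fintype.card X :=
  limsup_root_le one_pos (by positivity) fun n _ => gammaFn_le_real π n

lemma gammaRate_bdd {X : Type} {S : Type*} [Mul S] [Fintype X] (π : FreeSemigroup X →ₙ* S) :
    IsBoundedUnder (· ≤ ·) atTop (fun n : ℕ => (gammaFn π n : ℝ) ^ (1 / (n : ℝ))) :=
  root_isBounded one_pos (by positivity) fun n _ => gammaFn_le_real π n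

lemma gammaFn_two_pos {X : Type} {S : Type*} [Mul S] [Fintype X] [Nonempty X]
    (π : FreeSemigroup X →ₙ* S) : 0 < gammaFn π 2 := by
  obtain ⟨x⟩ := ‹Nonempty X›
  have : Nonempty (CoPair π 2) := ⟨⟨(FreeSemigroup.of x, FreeSemigroup.of x), rfl, rfl⟩⟩
  exact Nat.card_pos (α := CoPair π 2)

lemma summable_of_gammaRate_lt {X : Type} {S : Type*} [Mul S] [Fintype X]
    (π : FreeSemigroup X →ₙ* S) {s r : ℝ} (hs : gammaRate π < s) (hs0 : 0 < s) (hsr : s < r) :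
    Summable fun n : ℕ => (gammaFn π n : ℝ) * r⁻¹ ^ n := by
  have hr : 0 < r := hs0.trans hsr
  have hev := eventually_lt_of_limsup_lt hs (gammaRate_bdd π)
  have hg : Summable fun n : ℕ => (s / r) ^ n :=
    summable_geometric_of_lt_one (by positivity) ((div_lt_one hr).2 hsr)
  refine hg.of_norm_bounded_eventually_nat ?_
  filter_upwards [hev, eventually_ge_atTop 1] with n hn hn1
  rw [Real.norm_of_nonneg (by positivity), div_eq_mul_inv, mul_pow]
  refine mul_le_mul_of_nonneg_right ?_ (by positivity)
  calc (gammaFn π n : ℝ) = ((gammaFn π n : ℝ) ^ (1 / (n : ℝ))) ^ n := by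
        rw [one_div, Real.rpow_inv_natCast_pow (by positivity) (by omega)]
    _ ≤ s ^ n := pow_le_pow_left₀ (by positivity) hn.le n

/-! ### Comparison of the two rates -/

theorem gammaRate_add_one_le {X : Type} {S : Type*} [Semigroup S] [Fintype X] [Nonempty X]
    (π : FreeSemigroup X →ₙ* S)
    (ρ : FreeSemigroup (Option X) →ₙ* WithOne S)
    (hρX : ∀ x : X, ρ (FreeSemigroup.of (some x)) = (π (FreeSemigroup.of x) : WithOne S))
    (hρe : ρ (FreeSemigroup.of (none : Option X)) = 1) :
    gammaRate π + 1 ≤ gammaRate ρ := by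
  have hle := choose_mul_gammaFn_le π ρ hρX hρe
  have h1 : 1 ≤ gammaRate ρ := by
    refine le_limsup_of_frequently_le (Eventually.frequently ?_) (gammaRate_bdd ρ)
    filter_upwards [eventually_ge_atTop 2] with n hn
    obtain ⟨m, rfl⟩ := Nat.exists_eq_add_of_le' hn
    have : 0 < gammaFn ρ (m + 2) :=
      (Nat.mul_pos (Nat.choose_pos (by omega)) (gammaFn_two_pos π)).trans_le (hle m 2)
    exact Real.one_le_rpow (by exact_mod_cast this) (by positivity)
  refine le_of_forall_gt_imp_ge_of_dense fun r hr => ?_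
  obtain ⟨s, hs, hsr⟩ := exists_between hr
  have hr1 : 1 < r := h1.trans_lt hr
  have hr0 : 0 < r := by linarith
  have hsum := summable_of_gammaRate_lt ρ hs (by linarith) hsr
  set x := r⁻¹ with hx
  have hx0 : 0 < x := inv_pos.2 hr0
  have hx1 : x < 1 := inv_lt_one_of_one_lt₀ hr1
  have hy : 0 < 1 - x := by linarith
  set C := ∑' n, (gammaFn ρ n : ℝ) * x ^ n with hC
  have hC0 : 0 ≤ C := tsum_nonneg fun n => by positivity
  -- The `k`-th coefficient bound, from `∑ₘ (m+k choose k) xᵐ = (1 - x)⁻⁽ᵏ⁺¹⁾`.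
  have hk : ∀ k, (gammaFn π k : ℝ) ≤ C * (1 - x) * (r - 1) ^ k := by
    intro k
    have hS := (hasSum_choose_mul_geometric_of_norm_lt_one (𝕜 := ℝ) k (r := x)
      (by rwa [Real.norm_of_nonneg hx0.le])).mul_left ((gammaFn π k : ℝ) * x ^ k)
    have hshift : Summable fun m : ℕ => (gammaFn ρ (m + k) : ℝ) * x ^ (m + k) :=
      (summable_nat_add_iff k).2 hsum
    have hb : (gammaFn π k : ℝ) * x ^ k * (1 / (1 - x) ^ (k + 1)) ≤ C := by
      rw [← hS.tsum_eq]
      refine (hS.summable.tsum_le_tsum (fun m => ?_) hshift).trans ?_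
      · have : (((m + k).choose k : ℕ) : ℝ) * gammaFn π k ≤ gammaFn ρ (m + k) := by
          exact_mod_cast hle m k
        calc _ = (((m + k).choose k : ℕ) : ℝ) * gammaFn π k * x ^ (m + k) := by ring
          _ ≤ _ := mul_le_mul_of_nonneg_right this (by positivity)
      · rw [hC, ← hsum.sum_add_tsum_nat_add k]
        exact le_add_of_nonneg_left (Finset.sum_nonneg fun n _ => by positivity)
    have hrx : r - 1 = (1 - x) / x := by rw [hx]; field_simp
    rw [mul_one_div, div_le_iff₀ (by positivity)] at hb
    rw [hrx, div_pow, ← mul_div_assoc, le_div_iff₀ (by positivity)]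
    calc _ ≤ _ := hb
      _ = _ := by ring
  have := limsup_root_le (f := gammaFn π) (C := C * (1 - x) + 1) (r := r - 1) (by positivity)
    (by linarith) fun k hk1 => by
      refine (hk k).trans (mul_le_mul_of_nonneg_right ?_ (pow_nonneg (by linarith) _))
      have : (1 : ℝ) ≤ k := by exact_mod_cast hk1
      nlinarith [mul_nonneg hC0 hy.le]
  change gammaRate π ≤ r - 1 at this
  linarith

/-- Adjoining to a choice of generators `X` for `S` a new generator (the symbol `none`)
representing the adjoined identity of `S¹ = WithOne S` increases the global cogrowth
rate by at least `1`; in particular maximal global cogrowth is preserved. -/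
theorem stmt3 {X : Type} {S : Type*} [Semigroup S] [Fintype X] [Nonempty X]
    (π : FreeSemigroup X →ₙ* S) (hπ : Function.Surjective π)
    (ρ : FreeSemigroup (Option X) →ₙ* WithOne S)
    (hρX : ∀ x : X, ρ (FreeSemigroup.of (some x)) = (π (FreeSemigroup.of x) : WithOne S))
    (hρe : ρ (FreeSemigroup.of (none : Option X)) = 1) :
    gammaRate π + 1 ≤ gammaRate ρ ∧
      (gammaRate π = Fintype.card X → gammaRate ρ = Fintype.card (Option X)) := by
  have h := gammaRate_add_one_le π ρ hρX hρe
  refine ⟨h, fun hmax => le_antisymm (gammaRate_le_card ρ) ?_⟩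
  rw [Fintype.card_option, Nat.cast_add, Nat.cast_one, ← hmax]
  exact h
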